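/- arXiv:2410.22169 — 3 statements merged into one kernel-verified Lean document; each statement's English description precedes it below -/
import Mathlib

section
/- Suppose u* ∈ ℝⁿ satisfies AᵀAu* = Aᵀb and Lu* = g. If γ > 0 and u_γ ∈ ℝⁿ minimizes J_γ over ℝⁿ, then Au_γ = Au*. In particular the data reconstructed from any stabilized-regularized minimizer coincides with Au* for every positive regularization parameter γ, whatever seminorm N is used in the regularization term. -/
open scoped Matrix RealInnerProductSpace

/-- Multiplication of a Euclidean vector by a real matrix, landing in Euclidean space
(so that `‖·‖` and `⟪·,·⟫` denote the Euclidean norm and inner product). -/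
noncomputable def mulE {m n : ℕ} (A : Matrix (Fin m) (Fin n) ℝ)
    (v : EuclideanSpace ℝ (Fin n)) : EuclideanSpace ℝ (Fin m) :=
  Matrix.toEuclideanLin A v

/-- The stabilized-regularized functional
`J_γ(v) = ½‖Av − b‖² − ½‖b‖² + (γ/2)‖AᵀAv − Aᵀb‖² + (γ/2) N(Lv − g)²`,
where `N` is a seminorm on `ℝᵖ`. -/
noncomputable def Jg {m n p : ℕ} (A : Matrix (Fin m) (Fin n) ℝ)
    (b : EuclideanSpace ℝ (Fin m)) (L : Matrix (Fin p) (Fin n) ℝ)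
    (g : EuclideanSpace ℝ (Fin p)) (N : Seminorm ℝ (EuclideanSpace ℝ (Fin p)))
    (γ : ℝ) (v : EuclideanSpace ℝ (Fin n)) : ℝ :=
  (1 / 2) * ‖mulE A v - b‖ ^ 2 - (1 / 2) * ‖b‖ ^ 2
    + (γ / 2) * ‖mulE Aᵀ (mulE A v) - mulE Aᵀ b‖ ^ 2
    + (γ / 2) * (N (mulE L v - g)) ^ 2

/-!
A solution `u` of the normal equation makes the stabilization term vanish, and it also minimizes
the regularization term, so any `v` whose functional value is at most that of `u` fits the data at
least as well: `‖Tv - b‖ ≤ ‖Tu - b‖`. But `Tu - b` is orthogonal to the range of `T`, so by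
Pythagoras `‖Tv - b‖² = ‖Tv - Tu‖² + ‖Tu - b‖²`, which forces `Tv = Tu`.
-/

section LeastSquares

variable {𝕜 E F : Type*} [RCLike 𝕜]
  [SeminormedAddCommGroup E] [InnerProductSpace 𝕜 E] [NormedAddCommGroup F] [InnerProductSpace 𝕜 F]

theorem eq_zero_of_inner_eq_zero_of_norm_add_le {x y : F} (hxy : inner 𝕜 x y = 0)
    (hle : ‖x + y‖ ≤ ‖y‖) : x = 0 := by
  have pythagoras : ‖x + y‖ * ‖x + y‖ = ‖x‖ * ‖x‖ + ‖y‖ * ‖y‖ :=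
    norm_add_sq_eq_norm_sq_add_norm_sq_of_inner_eq_zero x y hxy
  have hsq : ‖x + y‖ * ‖x + y‖ ≤ ‖y‖ * ‖y‖ := mul_self_le_mul_self (norm_nonneg _) hle
  have hx : ‖x‖ * ‖x‖ = 0 := le_antisymm (by linarith) (mul_self_nonneg _)
  exact norm_eq_zero.mp (mul_self_eq_zero.mp hx)

theorem map_eq_map_of_normal_eq_of_residual_norm_le {T : E →ₗ[𝕜] F} {S : F →ₗ[𝕜] E} {b : F}
    {u v : E} (hTS : ∀ x y, inner 𝕜 (T x) y = inner 𝕜 x (S y)) (hu : S (T u) = S b)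
    (hle : ‖T v - b‖ ≤ ‖T u - b‖) : T v = T u := by
  have horth : inner 𝕜 (T v - T u) (T u - b) = 0 := by
    rw [← map_sub, hTS, map_sub S, hu, sub_self, inner_zero_right]
  have hle' : ‖(T v - T u) + (T u - b)‖ ≤ ‖T u - b‖ := by rwa [sub_add_sub_cancel]
  exact sub_eq_zero.mp (eq_zero_of_inner_eq_zero_of_norm_add_le horth hle')

end LeastSquares

section StabilizedFunctional

variable {E F : Type*} [SeminormedAddCommGroup E] [SeminormedAddCommGroup F]

/-- The least-squares functional of the equation `T v = b`, with the residual of the normal equation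
as stabilization term and an arbitrary regularization term `R`. The map `S` stands for an adjoint
of `T`; it is an argument because on incomplete spaces an adjoint need not exist. The functional
`Jg` is the case `T = A`, `S = Aᵀ`, `R v = N (L v - g) ^ 2`. -/
noncomputable def stabilizedFunctional (T : E → F) (S : F → E) (b : F) (R : E → ℝ) (γ : ℝ)
    (v : E) : ℝ :=
  (1 / 2) * ‖T v - b‖ ^ 2 - (1 / 2) * ‖b‖ ^ 2
    + (γ / 2) * ‖S (T v) - S b‖ ^ 2
    + (γ / 2) * R v

theorem residual_norm_le_of_stabilizedFunctional_le {T : E → F} {S : F → E} {b : F} {R : E → ℝ}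
    {γ : ℝ} {u v : E} (hγ : 0 ≤ γ) (hu : S (T u) = S b) (hR : R u ≤ R v)
    (hle : stabilizedFunctional T S b R γ v ≤ stabilizedFunctional T S b R γ u) :
    ‖T v - b‖ ≤ ‖T u - b‖ := by
  have hstab_u : ‖S (T u) - S b‖ ^ 2 = 0 := by simp [hu]
  have hstab_v : 0 ≤ (γ / 2) * ‖S (T v) - S b‖ ^ 2 := by positivity
  have hreg : (γ / 2) * R u ≤ (γ / 2) * R v := by gcongr
  simp only [stabilizedFunctional, hstab_u] at hle
  have hsq : ‖T v - b‖ ^ 2 ≤ ‖T u - b‖ ^ 2 := by linarith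
  exact (sq_le_sq₀ (norm_nonneg _) (norm_nonneg _)).mp hsq

end StabilizedFunctional

theorem inner_mulE_left {m n : ℕ} (A : Matrix (Fin m) (Fin n) ℝ) (x : EuclideanSpace ℝ (Fin n))
    (y : EuclideanSpace ℝ (Fin m)) : inner ℝ (mulE A x) y = inner ℝ x (mulE Aᵀ y) := by
  rw [mulE, mulE, ← Matrix.conjTranspose_eq_transpose_of_trivial,
    Matrix.toEuclideanLin_conjTranspose_eq_adjoint, LinearMap.adjoint_inner_right]

theorem stmt3_general {𝕜 E F : Type*} [RCLike 𝕜] [SeminormedAddCommGroup E] [InnerProductSpace 𝕜 E]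
    [NormedAddCommGroup F] [InnerProductSpace 𝕜 F] {T : E →ₗ[𝕜] F} {S : F →ₗ[𝕜] E}
    (hTS : ∀ x y, inner 𝕜 (T x) y = inner 𝕜 x (S y)) {b : F} {R : E → ℝ} {γ : ℝ} (hγ : 0 ≤ γ)
    {u v : E} (hu : S (T u) = S b) (hR : R u ≤ R v)
    (hle : stabilizedFunctional T S b R γ v ≤ stabilizedFunctional T S b R γ u) :
    T v = T u :=
  map_eq_map_of_normal_eq_of_residual_norm_le hTS hu
    (residual_norm_le_of_stabilizedFunctional_le hγ hu hR hle)

/-- If `u⋆` satisfies `AᵀAu⋆ = Aᵀb` and `Lu⋆ = g`, `γ > 0`, and `uγ` minimizes `J_γ`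
over `ℝⁿ`, then `Auγ = Au⋆`, for any seminorm `N` used in the regularization term. -/
theorem stmt3 {m n p : ℕ} (A : Matrix (Fin m) (Fin n) ℝ) (b : EuclideanSpace ℝ (Fin m))
    (L : Matrix (Fin p) (Fin n) ℝ) (g : EuclideanSpace ℝ (Fin p))
    (N : Seminorm ℝ (EuclideanSpace ℝ (Fin p))) (γ : ℝ) (hγ : 0 < γ)
    (ustar : EuclideanSpace ℝ (Fin n))
    (hnormal : mulE Aᵀ (mulE A ustar) = mulE Aᵀ b)
    (hreg : mulE L ustar = g)
    (uγ : EuclideanSpace ℝ (Fin n))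
    (hmin : ∀ v : EuclideanSpace ℝ (Fin n), Jg A b L g N γ uγ ≤ Jg A b L g N γ v) :
    mulE A uγ = mulE A ustar := by
  have hR : N (mulE L ustar - g) ^ 2 ≤ N (mulE L uγ - g) ^ 2 := by simp [hreg]
  exact stmt3_general (R := fun v ↦ N (mulE L v - g) ^ 2) (inner_mulE_left A) hγ.le hnormal hR
    (hmin ustar)
end

section
/- Let γ > 0 and let u_γ and ũ_γ be solutions of the stabilized-regularized linear system ((I + γAᵀA)AᵀA + γLᵀL) u = (I + γAᵀA)Aᵀc + γLᵀg corresponding to the right-hand data c = b and c = b̃ respectively. Then ‖A(u_γ − ũ_γ)‖ ≤ ‖(I + γAAᵀ)(b − b̃)‖. -/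
open scoped Matrix RealInnerProductSpace

/-!
Applying `I + γA†A` after `A†` is the same as applying `A†` after `I + γAA†`. Subtracting the two
systems therefore gives, for `w = u - u'` and `e = (I + γAA†)(b - b')`, a perturbed normal equation
`A†A w + r = A†e` whose perturbation `r = γ((A†A)² + L†L) w` satisfies `0 ≤ re ⟪r, w⟫`. Pairing with
`w` yields `‖A w‖² ≤ re ⟪e, A w⟫`, and Cauchy–Schwarz concludes.
-/

section HilbertSpace

open ContinuousLinearMap RCLike
open scoped InnerProduct

variable {𝕜 E F G : Type*} [RCLike 𝕜]
  [NormedAddCommGroup E] [InnerProductSpace 𝕜 E] [CompleteSpace E]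
  [NormedAddCommGroup F] [InnerProductSpace 𝕜 F] [CompleteSpace F]
  [NormedAddCommGroup G] [InnerProductSpace 𝕜 G] [CompleteSpace G]

theorem one_add_smul_adjoint_comp_self_apply_adjoint (A : E →L[𝕜] F) (c : 𝕜) (d : F) :
    (1 + c • (A† ∘L A)) ((A†) d) = (A†) ((1 + c • (A ∘L A†)) d) := by
  simp only [add_apply, one_apply_eq_self, smul_apply, comp_apply, map_add, map_smul]

theorem norm_apply_le_of_perturbed_normal_eq {A : E →L[𝕜] F} {w r : E} {e : F}
    (h : (A†) (A w) + r = (A†) e) (hr : 0 ≤ re (inner 𝕜 r w)) : ‖A w‖ ≤ ‖e‖ := by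
  have energy : ‖A w‖ ^ 2 + re (inner 𝕜 r w) = re (inner 𝕜 e (A w)) := by
    rw [← adjoint_inner_left, ← h, inner_add_left, adjoint_inner_left, map_add,
      inner_self_eq_norm_sq]
  have cauchy_schwarz : re (inner 𝕜 e (A w)) ≤ ‖e‖ * ‖A w‖ := re_inner_le_norm e (A w)
  by_contra! hlt
  nlinarith [norm_nonneg e]

theorem re_inner_stabilizer_add_regularizer_nonneg (A : E →L[𝕜] F) (L : E →L[𝕜] G) {γ : ℝ}
    (hγ : 0 ≤ γ) (w : E) :
    0 ≤ re (inner 𝕜 ((γ : 𝕜) • ((A†) (A ((A†) (A w))) + (L†) (L w))) w) := by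
  have quadratic_form : re (inner 𝕜 ((γ : 𝕜) • ((A†) (A ((A†) (A w))) + (L†) (L w))) w) =
      γ * (‖(A†) (A w)‖ ^ 2 + ‖L w‖ ^ 2) := by
    rw [inner_smul_left, conj_ofReal, re_ofReal_mul, inner_add_left, map_add,
      adjoint_inner_left A, ← adjoint_inner_right A ((A†) (A w)), adjoint_inner_left L,
      inner_self_eq_norm_sq, inner_self_eq_norm_sq]
  rw [quadratic_form]
  positivity

theorem norm_apply_le_of_stabilized_regularized_eq (A : E →L[𝕜] F) (L : E →L[𝕜] G)
    {γ : ℝ} (hγ : 0 ≤ γ) {w : E} {d : F}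
    (h : ((1 + (γ : 𝕜) • (A† ∘L A)) * (A† ∘L A) + (γ : 𝕜) • (L† ∘L L)) w =
      (1 + (γ : 𝕜) • (A† ∘L A)) ((A†) d)) :
    ‖A w‖ ≤ ‖(1 + (γ : 𝕜) • (A ∘L A†)) d‖ := by
  refine norm_apply_le_of_perturbed_normal_eq ?_
    (re_inner_stabilizer_add_regularizer_nonneg A L hγ w)
  rw [← one_add_smul_adjoint_comp_self_apply_adjoint, ← h]
  simp only [add_apply, one_apply_eq_self, mul_apply_eq_comp, smul_apply, comp_apply, smul_add,
    add_assoc]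

theorem stmt10_general (A : E →L[𝕜] F) (L : E →L[𝕜] G) {γ : ℝ} (hγ : 0 ≤ γ)
    {b b' : F} {g : G} {u u' : E}
    (hu : ((1 + (γ : 𝕜) • (A† ∘L A)) * (A† ∘L A) + (γ : 𝕜) • (L† ∘L L)) u =
      (1 + (γ : 𝕜) • (A† ∘L A)) ((A†) b) + (γ : 𝕜) • (L†) g)
    (hu' : ((1 + (γ : 𝕜) • (A† ∘L A)) * (A† ∘L A) + (γ : 𝕜) • (L† ∘L L)) u' =
      (1 + (γ : 𝕜) • (A† ∘L A)) ((A†) b') + (γ : 𝕜) • (L†) g) :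
    ‖A (u - u')‖ ≤ ‖(1 + (γ : 𝕜) • (A ∘L A†)) (b - b')‖ := by
  apply norm_apply_le_of_stabilized_regularized_eq A L hγ
  rw [map_sub, hu, hu', add_sub_add_right_eq_sub, map_sub, map_sub]

end HilbertSpace

section EuclideanOperator

open scoped InnerProduct

variable {𝕜 ι κ μ : Type*} [RCLike 𝕜] [Fintype ι] [DecidableEq ι] [Fintype κ] [DecidableEq κ]
  [Fintype μ]

/-- The linear identification of matrices with bounded operators between Euclidean spaces.
It carries statements about `mulE` to operators on Hilbert spaces, where the conjugate transpose is
the adjoint; `Matrix.toEuclideanCLM` covers only square matrices. -/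
noncomputable def euclideanCLM :
    Matrix μ ι 𝕜 ≃ₗ[𝕜] (EuclideanSpace 𝕜 ι →L[𝕜] EuclideanSpace 𝕜 μ) :=
  Matrix.toEuclideanLin ≪≫ₗ LinearMap.toContinuousLinearMap

theorem euclideanCLM_one : euclideanCLM (1 : Matrix ι ι 𝕜) = 1 :=
  congrArg LinearMap.toContinuousLinearMap (Matrix.toLpLin_one 2)

theorem euclideanCLM_mul (A : Matrix μ κ 𝕜) (B : Matrix κ ι 𝕜) :
    euclideanCLM (A * B) = euclideanCLM A ∘L euclideanCLM B :=
  congrArg LinearMap.toContinuousLinearMap (Matrix.toLpLin_mul 2 2 2 A B)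

theorem euclideanCLM_conjTranspose (A : Matrix κ ι 𝕜) :
    euclideanCLM Aᴴ = (euclideanCLM A)† :=
  congrArg LinearMap.toContinuousLinearMap (Matrix.toEuclideanLin_conjTranspose_eq_adjoint A)

theorem mulE_eq_euclideanCLM {m n : ℕ} (A : Matrix (Fin m) (Fin n) ℝ) :
    mulE A = euclideanCLM A := rfl

end EuclideanOperator

/-- If `γ > 0` and `u`, `u'` solve the stabilized-regularized linear system
`((I + γAᵀA)AᵀA + γLᵀL) u = (I + γAᵀA)Aᵀc + γLᵀg` with right-hand data `c = b` and
`c = b'` respectively, then `‖A(u − u')‖ ≤ ‖(I + γAAᵀ)(b − b')‖`. -/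
theorem stmt10 {m n p : ℕ} (A : Matrix (Fin m) (Fin n) ℝ)
    (b b' : EuclideanSpace ℝ (Fin m))
    (L : Matrix (Fin p) (Fin n) ℝ) (g : EuclideanSpace ℝ (Fin p))
    (γ : ℝ) (hγ : 0 < γ) (u u' : EuclideanSpace ℝ (Fin n))
    (hu : mulE ((1 + γ • (Aᵀ * A)) * (Aᵀ * A) + γ • (Lᵀ * L)) u
        = mulE (1 + γ • (Aᵀ * A)) (mulE Aᵀ b) + γ • mulE Lᵀ g)
    (hu' : mulE ((1 + γ • (Aᵀ * A)) * (Aᵀ * A) + γ • (Lᵀ * L)) u'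
        = mulE (1 + γ • (Aᵀ * A)) (mulE Aᵀ b') + γ • mulE Lᵀ g) :
    ‖mulE A (u - u')‖ ≤ ‖mulE (1 + γ • (A * Aᵀ)) (b - b')‖ := by
  simp only [mulE_eq_euclideanCLM, map_add, map_smul, euclideanCLM_one, euclideanCLM_mul,
    ← Matrix.conjTranspose_eq_transpose_of_trivial, euclideanCLM_conjTranspose] at hu hu' ⊢
  exact stmt10_general _ _ hγ.le hu hu'
end

section
/- Let γ > 0, suppose u* ∈ ℝⁿ satisfies AᵀAu* = Aᵀb and Lu* = g, and let ũ_γ be a solution of the stabilized-regularized linear system ((I + γAᵀA)AᵀA + γLᵀL) u = (I + γAᵀA)Aᵀb̃ + γLᵀg with perturbed right-hand data b̃ ∈ ℝᵐ. Assume the corresponding system with unperturbed data b also admits a solution. Then ‖Au* − Aũ_γ‖ ≤ ‖(I + γAAᵀ)(b − b̃)‖. -/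
open scoped Matrix RealInnerProductSpace

/-! The error `e = u - u'` of two solutions solves the system with data `b - b'` and `0`. As
`(1 + γ A†A) A† = A† (1 + γ A A†)`, that system reads `A†A e + T e = A† c`, where
`c = (1 + γ A A†) (b - b')` and `T = γ (A†A)² + γ L†L` is positive. Pairing with `e` and discarding
`⟪T e, e⟫ ≥ 0` leaves `‖A e‖² ≤ re ⟪c, A e⟫`, and Cauchy–Schwarz finishes. The vector `u⋆` itself
solves the unperturbed system. -/

section Operator

open ContinuousLinearMap RCLike
open scoped InnerProduct ComplexOrder

variable {𝕜 E F G : Type*} [RCLike 𝕜]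
  [NormedAddCommGroup E] [InnerProductSpace 𝕜 E] [CompleteSpace E]
  [NormedAddCommGroup F] [InnerProductSpace 𝕜 F] [CompleteSpace F]
  [NormedAddCommGroup G] [InnerProductSpace 𝕜 G] [CompleteSpace G]

theorem norm_apply_le_of_adjoint_apply_add_eq {A : E →L[𝕜] F} {T : E →L[𝕜] E}
    (hT : T.IsPositive) {c : F} {e : E} (h : (A†) (A e) + T e = (A†) c) : ‖A e‖ ≤ ‖c‖ := by
  have energy : ‖A e‖ ^ 2 + re (inner 𝕜 (T e) e) = re (inner 𝕜 c (A e)) := by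
    rw [← adjoint_inner_left, ← h, inner_add_left, map_add, adjoint_inner_left,
      inner_self_eq_norm_sq]
  have energy_le : ‖A e‖ * ‖A e‖ ≤ ‖c‖ * ‖A e‖ := by
    linarith [hT.re_inner_nonneg_left e, re_inner_le_norm (𝕜 := 𝕜) c (A e)]
  by_contra! hlt
  exact energy_le.not_gt (mul_lt_mul_of_pos_right hlt ((norm_nonneg c).trans_lt hlt))

/-- `u` solves the stabilized-regularized system `((1 + γ A†A) A†A + γ L†L) u = (1 + γ A†A) A† b +
γ L† g`, which approximates the least-squares problem `A†A u = A† b` under the side condition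
`L u = g`. The parameter `γ` is a scalar of `𝕜`; over `ℂ`, the condition `0 ≤ γ` forces it to be
real. -/
def IsStabilizedSolution (A : E →L[𝕜] F) (L : E →L[𝕜] G) (γ : 𝕜) (b : F) (g : G) (u : E) : Prop :=
  ((1 + γ • (A† ∘L A)) ∘L (A† ∘L A) + γ • (L† ∘L L) : E →L[𝕜] E) u =
    (1 + γ • (A† ∘L A)) ((A†) b) + γ • (L†) g

namespace IsStabilizedSolution

variable {A : E →L[𝕜] F} {L : E →L[𝕜] G} {γ : 𝕜} {b b' : F} {g g' : G} {u u' : E}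

theorem of_normal_equation (hA : (A†) (A u) = (A†) b) (hL : L u = g) :
    IsStabilizedSolution A L γ b g u := by
  simp only [IsStabilizedSolution, add_apply, comp_apply, smul_apply, hA, hL]

theorem sub (h : IsStabilizedSolution A L γ b g u) (h' : IsStabilizedSolution A L γ b' g' u') :
    IsStabilizedSolution A L γ (b - b') (g - g') (u - u') := by
  unfold IsStabilizedSolution at h h' ⊢
  simp only [map_sub, h, h', smul_sub]
  abel

theorem adjoint_apply_add_eq (h : IsStabilizedSolution A L γ b 0 u) :
    (A†) (A u) + (γ • ((A† ∘L A) ∘L (A† ∘L A)) + γ • (L† ∘L L)) u =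
      (A†) ((1 + γ • (A ∘L A†)) b) := by
  simpa [IsStabilizedSolution, add_assoc] using h

theorem norm_apply_le (hγ : 0 ≤ γ) (h : IsStabilizedSolution A L γ b 0 u) :
    ‖A u‖ ≤ ‖(1 + γ • (A ∘L A†)) b‖ := by
  have sq_isPositive : ((A† ∘L A) ∘L (A† ∘L A)).IsPositive := by
    simpa using isPositive_adjoint_comp_self (A† ∘L A)
  exact norm_apply_le_of_adjoint_apply_add_eq
    ((sq_isPositive.smul_of_nonneg hγ).add ((isPositive_adjoint_comp_self L).smul_of_nonneg hγ))
    h.adjoint_apply_add_eq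

end IsStabilizedSolution

theorem stmt12_general {A : E →L[𝕜] F} {L : E →L[𝕜] G} {γ : 𝕜} (hγ : 0 ≤ γ) {b b' : F} {g : G}
    {u u' : E} (hu : IsStabilizedSolution A L γ b g u)
    (hu' : IsStabilizedSolution A L γ b' g u') :
    ‖A u - A u'‖ ≤ ‖(1 + γ • (A ∘L A†)) (b - b')‖ := by
  rw [← map_sub]
  exact IsStabilizedSolution.norm_apply_le hγ (sub_self g ▸ hu.sub hu')

end Operator

section EuclideanMatrix

open scoped InnerProduct

variable {m n p k : ℕ}

/-- Multiplication by a real matrix as a continuous linear map between Euclidean spaces: the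
bundled form of `mulE`, which gives access to Hilbert space adjoints. -/
noncomputable def mulECLM (A : Matrix (Fin m) (Fin n) ℝ) :
    EuclideanSpace ℝ (Fin n) →L[ℝ] EuclideanSpace ℝ (Fin m) :=
  (Matrix.toEuclideanLin A).toContinuousLinearMap

theorem mulE_eq_mulECLM (A : Matrix (Fin m) (Fin n) ℝ) (v : EuclideanSpace ℝ (Fin n)) :
    mulE A v = mulECLM A v :=
  rfl

theorem mulECLM_transpose (A : Matrix (Fin m) (Fin n) ℝ) : mulECLM Aᵀ = (mulECLM A)† := by
  rw [mulECLM, mulECLM, ← LinearMap.adjoint_toContinuousLinearMap,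
    ← Matrix.toEuclideanLin_conjTranspose_eq_adjoint, Matrix.conjTranspose_eq_transpose_of_trivial]

theorem mulECLM_mul (A : Matrix (Fin m) (Fin n) ℝ) (B : Matrix (Fin n) (Fin k) ℝ) :
    mulECLM (A * B) = mulECLM A ∘L mulECLM B := by
  ext1 v
  exact LinearMap.congr_fun (Matrix.toLpLin_mul 2 2 2 A B) v

theorem mulECLM_one : mulECLM (1 : Matrix (Fin n) (Fin n) ℝ) = 1 := by
  ext1 v
  exact LinearMap.congr_fun (Matrix.toLpLin_one 2) v

theorem mulECLM_add (A B : Matrix (Fin m) (Fin n) ℝ) :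
    mulECLM (A + B) = mulECLM A + mulECLM B := by
  simp only [mulECLM, map_add]

theorem mulECLM_smul (c : ℝ) (A : Matrix (Fin m) (Fin n) ℝ) :
    mulECLM (c • A) = c • mulECLM A := by
  simp only [mulECLM, map_smul]

theorem isStabilizedSolution_mulECLM_iff {A : Matrix (Fin m) (Fin n) ℝ}
    {L : Matrix (Fin p) (Fin n) ℝ} {γ : ℝ} {b : EuclideanSpace ℝ (Fin m)}
    {g : EuclideanSpace ℝ (Fin p)} {u : EuclideanSpace ℝ (Fin n)} :
    IsStabilizedSolution (mulECLM A) (mulECLM L) γ b g u ↔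
      mulE ((1 + γ • (Aᵀ * A)) * (Aᵀ * A) + γ • (Lᵀ * L)) u =
        mulE (1 + γ • (Aᵀ * A)) (mulE Aᵀ b) + γ • mulE Lᵀ g := by
  simp only [IsStabilizedSolution, mulE_eq_mulECLM, mulECLM_add, mulECLM_mul, mulECLM_smul,
    mulECLM_one, mulECLM_transpose]

theorem mulE_one_add_smul_mul_transpose (A : Matrix (Fin m) (Fin n) ℝ) (γ : ℝ)
    (b : EuclideanSpace ℝ (Fin m)) :
    mulE (1 + γ • (A * Aᵀ)) b = (1 + γ • (mulECLM A ∘L (mulECLM A)†)) b := by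
  rw [mulE_eq_mulECLM, mulECLM_add, mulECLM_one, mulECLM_smul, mulECLM_mul, mulECLM_transpose]

end EuclideanMatrix

/-- Let `γ > 0`, let `u⋆` satisfy `AᵀAu⋆ = Aᵀb` and `Lu⋆ = g`, and let `u'` solve the
stabilized-regularized system `((I + γAᵀA)AᵀA + γLᵀL) u = (I + γAᵀA)Aᵀb' + γLᵀg` with
perturbed data `b'`. If the corresponding system with unperturbed data `b` also admits a
solution, then `‖Au⋆ − Au'‖ ≤ ‖(I + γAAᵀ)(b − b')‖`. -/
theorem stmt12 {m n p : ℕ} (A : Matrix (Fin m) (Fin n) ℝ)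
    (b b' : EuclideanSpace ℝ (Fin m))
    (L : Matrix (Fin p) (Fin n) ℝ) (g : EuclideanSpace ℝ (Fin p))
    (γ : ℝ) (hγ : 0 < γ)
    (ustar : EuclideanSpace ℝ (Fin n))
    (hnormal : mulE Aᵀ (mulE A ustar) = mulE Aᵀ b)
    (hreg : mulE L ustar = g)
    (u' : EuclideanSpace ℝ (Fin n))
    (hu' : mulE ((1 + γ • (Aᵀ * A)) * (Aᵀ * A) + γ • (Lᵀ * L)) u'
        = mulE (1 + γ • (Aᵀ * A)) (mulE Aᵀ b') + γ • mulE Lᵀ g)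
    (hex : ∃ u : EuclideanSpace ℝ (Fin n),
      mulE ((1 + γ • (Aᵀ * A)) * (Aᵀ * A) + γ • (Lᵀ * L)) u
        = mulE (1 + γ • (Aᵀ * A)) (mulE Aᵀ b) + γ • mulE Lᵀ g) :
    ‖mulE A ustar - mulE A u'‖ ≤ ‖mulE (1 + γ • (A * Aᵀ)) (b - b')‖ := by
  rw [mulE_one_add_smul_mul_transpose]
  exact stmt12_general hγ.le (.of_normal_equation (mulECLM_transpose A ▸ hnormal) hreg)
    (isStabilizedSolution_mulECLM_iff.mpr hu')
end
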